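/- arXiv:1502.05375 — 2 statements merged into one kernel-verified Lean document; each statement's English description precedes it below -/
import Mathlib

section
/- Let $T, K, k, m$ be natural numbers with $1 \le k \le K \le T$, and let $p = \binom{T-k}{K-k} / \binom{T}{K}$ (a rational/real number). If $\binom{T}{k} \cdot (1-p)^m < 1$, then there exist subsets $S_1, \dots, S_m$ of $\mathrm{Fin}\ T$, each of cardinality $K$, such that every subset $A \subseteq \mathrm{Fin}\ T$ with $|A| = k$ satisfies $A \subseteq S_i$ for some $i \in \{1, \dots, m\}$. -/
/-! The union bound is carried out by counting. Let `P` be the family of `K`-subsets of `Fin T`, with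
`N = T.choose K` members, and let `q = (T - k).choose (K - k)`, so that `p = q / N`. A fixed
`k`-set `A` lies in at least `q` members of `P` (`choose_le_card_superset`), hence at most
`(N - q) ^ m` of the `N ^ m` tuples in `P ^ m` miss `A`. If every tuple missed some `A`, then
`N ^ m ≤ T.choose k * (N - q) ^ m`; dividing by `N ^ m` contradicts the hypothesis.
-/

/-- The sets `A ∪ B`, with `B` a `(K - #A)`-subset of the complement of `A`, are distinct
`K`-sets containing `A`. -/
lemma choose_le_card_superset {T K : ℕ} (A : Finset (Fin T)) (hA : A.card ≤ K) :
    (T - A.card).choose (K - A.card) ≤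
      ((Finset.powersetCard K (Finset.univ : Finset (Fin T))).filter (A ⊆ ·)).card := by
  have hc : (T - A.card).choose (K - A.card) = (Finset.powersetCard (K - A.card) Aᶜ).card := by
    rw [Finset.card_powersetCard, Finset.card_compl, Fintype.card_fin]
  rw [hc]
  have hdisj : ∀ B ∈ Finset.powersetCard (K - A.card) Aᶜ, Disjoint A B := fun B hB =>
    Finset.disjoint_of_subset_right (Finset.mem_powersetCard.1 hB).1 disjoint_compl_right
  refine Finset.card_le_card_of_injOn (A ∪ ·) (fun B hB => ?_) (fun B hB C hC h => ?_)
  · have hd := hdisj B hB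
    have hBc := (Finset.mem_powersetCard.1 hB).2
    simp only [Finset.coe_filter, Set.mem_ofPred_eq, Finset.mem_powersetCard]
    refine ⟨⟨Finset.subset_univ _, ?_⟩, Finset.subset_union_left⟩
    rw [Finset.card_union_of_disjoint hd, hBc]
    omega
  · have h' : A ∪ B = A ∪ C := h
    rw [← Finset.union_sdiff_cancel_left (hdisj B hB), h',
      Finset.union_sdiff_cancel_left (hdisj C hC)]

/-- Derandomized union bound: if `(T.choose k) * (1 - p)^m < 1` where
`p = (T-k).choose (K-k) / T.choose K`, then there are `K`-element subsets
`S 1, ..., S m` of `Fin T` covering every `k`-element subset. -/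
theorem stmt_1 (T K k m : ℕ) (hk1 : 1 ≤ k) (hkK : k ≤ K) (hKT : K ≤ T)
    (p : ℝ) (hp : p = ((T - k).choose (K - k) : ℝ) / (T.choose K : ℝ))
    (hm : (T.choose k : ℝ) * (1 - p) ^ m < 1) :
    ∃ S : Fin m → Finset (Fin T),
      (∀ i, (S i).card = K) ∧
      ∀ A : Finset (Fin T), A.card = k → ∃ i, A ⊆ S i := by
  classical
  by_contra! hcon
  let P := Finset.powersetCard K (Finset.univ : Finset (Fin T))
  have hP : P.card = T.choose K := by simp [P]
  have hN : (0 : ℝ) < T.choose K := by exact_mod_cast Nat.choose_pos hKT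
  let miss : Finset (Fin T) → Finset (Fin m → Finset (Fin T)) := fun A =>
    Fintype.piFinset fun _ => P.filter (¬ A ⊆ ·)
  have hcover : Fintype.piFinset (fun _ : Fin m => P) ⊆
      (Finset.powersetCard k (Finset.univ : Finset (Fin T))).biUnion miss := by
    intro S hS
    rw [Fintype.mem_piFinset] at hS
    obtain ⟨A, hA, hAS⟩ := hcon S fun i => (Finset.mem_powersetCard.1 (hS i)).2
    refine Finset.mem_biUnion.2 ⟨A, Finset.mem_powersetCard.2 ⟨Finset.subset_univ _, hA⟩, ?_⟩
    exact Fintype.mem_piFinset.2 fun i => Finset.mem_filter.2 ⟨hS i, hAS i⟩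
  have hmiss : ∀ A ∈ Finset.powersetCard k (Finset.univ : Finset (Fin T)),
      ((miss A).card : ℝ) ≤ ((T.choose K : ℝ) - (T - k).choose (K - k)) ^ m := by
    intro A hA
    have hAk : A.card = k := (Finset.mem_powersetCard.1 hA).2
    have h1 := choose_le_card_superset (K := K) A (by omega)
    have h2 := Finset.card_filter_add_card_filter_not (s := P) (A ⊆ ·)
    rw [hAk] at h1
    have h1' : ((T - k).choose (K - k) : ℝ) ≤ (P.filter (A ⊆ ·)).card := by exact_mod_cast h1
    have h2' : ((P.filter (A ⊆ ·)).card : ℝ) + (P.filter (¬ A ⊆ ·)).card = T.choose K := by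
      rw [← hP]; exact_mod_cast h2
    rw [Fintype.card_piFinset_const, Nat.cast_pow]
    exact pow_le_pow_left₀ (Nat.cast_nonneg _) (by linarith) m
  have hcount : (T.choose K : ℝ) ^ m ≤
      T.choose k * ((T.choose K : ℝ) - (T - k).choose (K - k)) ^ m := by
    have h := (Finset.card_le_card hcover).trans Finset.card_biUnion_le
    rw [Fintype.card_piFinset_const, hP] at h
    calc (T.choose K : ℝ) ^ m
        ≤ ∑ A ∈ Finset.powersetCard k (Finset.univ : Finset (Fin T)), ((miss A).card : ℝ) := by
          exact_mod_cast h
      _ ≤ _ := Finset.sum_le_card_nsmul _ _ _ hmiss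
      _ = _ := by simp
  have hfac : (T.choose K : ℝ) - (T - k).choose (K - k) = T.choose K * (1 - p) := by
    rw [hp]; field_simp
  rw [hfac, mul_pow] at hcount
  nlinarith [pow_pos hN m]
end

section
/- There exist a natural number $\alpha \ge 2$ and real constants $c \ge 1$ and $k_0$ such that for all natural numbers $k, t$ with $k \ge k_0$ and $t \ge c \cdot k$, $$\frac{\binom{\alpha t}{\alpha k}}{\binom{\alpha t - k}{\alpha k - k}} \le e^{-k/4.01} \cdot \binom{t}{k}.$$ -/
/-!
The value `α = 2` suffices. The subset-of-a-subset identity gives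
`choose (2t, 2k) / choose (2t - k, k) = choose (2t, k) / choose (2k, k)`, so the ratio of the left
side to `choose (t, k)` is the product over `i < k` of
`(2t - i)(k - i) / ((2k - i)(t - i)) = 1 - i(t - k) / ((2k - i)(t - i))`.
Each factor is at most `exp (-i s)` with `s = (t - k) / (2kt)`, hence the product is at most
`exp (-s k(k - 1)/2) = exp (-(1 - k/t)(k - 1)/4)`. Once `k ≥ 1000` and `t ≥ 1000 k`, this is
below `exp (-k/4.01)`, because `0.999 ^ 2 ≥ 4/4.01`.
-/

/-- The bound on a single factor of the product, with denominators cleared. -/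
lemma factor_le {k t i : ℝ} (hk : 0 < k) (hkt : k ≤ t) (hi : 0 ≤ i) (hik : i < k) :
    (2 * t - i) * (k - i) ≤
      Real.exp (-(i * ((t - k) / (2 * k * t)))) * ((t - i) * (2 * k - i)) := by
  have ht : 0 < t := by linarith
  have hden : 0 ≤ (t - i) * (2 * k - i) := mul_nonneg (by linarith) (by linarith)
  have hexp := Real.add_one_le_exp (-(i * ((t - k) / (2 * k * t))))
  have hle : (t - i) * (2 * k - i) ≤ t * (2 * k) :=
    mul_le_mul (by linarith) (by linarith) (by linarith) ht.le
  have hs : 0 ≤ i * ((t - k) / (2 * k * t)) :=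
    mul_nonneg hi (div_nonneg (by linarith) (by positivity))
  have hmain : i * ((t - k) / (2 * k * t)) * ((t - i) * (2 * k - i)) ≤ i * (t - k) := by
    calc _ ≤ i * ((t - k) / (2 * k * t)) * (t * (2 * k)) := mul_le_mul_of_nonneg_left hle hs
      _ = i * (t - k) := by field_simp
  calc (2 * t - i) * (k - i) = (t - i) * (2 * k - i) - i * (t - k) := by ring
    _ ≤ (-(i * ((t - k) / (2 * k * t))) + 1) * ((t - i) * (2 * k - i)) := by linarith
    _ ≤ _ := mul_le_mul_of_nonneg_right hexp hden

/-- The product of the first `m` factor bounds, written with falling factorials. -/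
lemma descFactorial_bound {k t : ℕ} (hk : 0 < k) (hkt : k ≤ t) (m : ℕ) (hm : m ≤ k) :
    ((2 * t).descFactorial m : ℝ) * (k.descFactorial m : ℝ) ≤
      Real.exp (-((m : ℝ) * (m - 1) / 2 * ((t - k) / (2 * k * t)))) *
        ((t.descFactorial m : ℝ) * ((2 * k).descFactorial m : ℝ)) := by
  induction m with
  | zero => simp
  | succ m ih =>
    have ih := ih (by omega)
    have hf := factor_le (k := k) (t := t) (i := m) (by exact_mod_cast hk) (by exact_mod_cast hkt)
      (by positivity) (by exact_mod_cast hm)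
    have hmk : (m : ℝ) < k := by exact_mod_cast hm
    have hkt' : (k : ℝ) ≤ t := by exact_mod_cast hkt
    have hnn : 0 ≤ (2 * (t : ℝ) - m) * (k - m) := by
      apply mul_nonneg <;> linarith
    have hexp : Real.exp (-(((m + 1 : ℕ) : ℝ) * ((m + 1 : ℕ) - 1) / 2 * ((t - k) / (2 * k * t))))
        = Real.exp (-(m * (((t : ℝ) - k) / (2 * k * t)))) *
          Real.exp (-((m : ℝ) * (m - 1) / 2 * ((t - k) / (2 * k * t)))) := by
      rw [← Real.exp_add]
      congr 1
      push_cast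
      ring
    rw [hexp]
    simp only [Nat.descFactorial_succ, Nat.cast_mul]
    rw [Nat.cast_sub (by omega), Nat.cast_sub (by omega), Nat.cast_sub (by omega),
      Nat.cast_sub (by omega)]
    push_cast
    have := mul_le_mul hf ih (by positivity) (hnn.trans hf)
    linarith

theorem stmt_4 :
    ∃ α : ℕ, 2 ≤ α ∧ ∃ c : ℝ, 1 ≤ c ∧ ∃ k₀ : ℝ,
      ∀ k t : ℕ, k₀ ≤ (k : ℝ) → c * (k : ℝ) ≤ (t : ℝ) →
        ((α * t).choose (α * k) : ℝ) / ((α * t - k).choose (α * k - k) : ℝ)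
          ≤ Real.exp (-(k : ℝ) / 4.01) * (t.choose k : ℝ) := by
  refine ⟨2, le_rfl, 1000, by norm_num, 1000, fun k t hk ht => ?_⟩
  have hk0 : (0 : ℝ) < k := by linarith
  have ht0 : (0 : ℝ) < t := by linarith
  have hkn : 0 < k := by exact_mod_cast hk0
  have hkt : k ≤ t := by
    have : (k : ℝ) ≤ t := by linarith
    exact_mod_cast this
  have hB := descFactorial_bound hkn hkt k le_rfl
  have hE : Real.exp (-((k : ℝ) * (k - 1) / 2 * ((t - k) / (2 * k * t)))) ≤
      Real.exp (-(k : ℝ) / 4.01) := by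
    apply Real.exp_le_exp.mpr
    have h1 : (k : ℝ) * (k - 1) / 2 * ((t - k) / (2 * k * t)) = (k - 1) / 4 * ((t - k) / t) := by
      field_simp
      ring
    have h2 : (0.999 : ℝ) ≤ (t - k) / t := by
      rw [le_div_iff₀ ht0]
      linarith
    have h3 : ((k : ℝ) - 1) / 4 * 0.999 ≤ (k - 1) / 4 * ((t - k) / t) :=
      mul_le_mul_of_nonneg_left h2 (by linarith)
    rw [h1]
    have h4 : (k : ℝ) / 4.01 ≤ (k - 1) / 4 * 0.999 := by
      rw [div_le_iff₀ (by norm_num)]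
      linarith
    rw [neg_div]
    linarith
  have hC : ((2 * t).choose k : ℝ) ≤
      Real.exp (-(k : ℝ) / 4.01) * t.choose k * (2 * k).choose k := by
    have hfac : (0 : ℝ) < k.factorial := by exact_mod_cast k.factorial_pos
    simp only [Nat.descFactorial_eq_factorial_mul_choose, Nat.choose_self, Nat.cast_mul,
      Nat.cast_one, mul_one] at hB
    have h := hB.trans (mul_le_mul_of_nonneg_right hE (by positivity))
    refine le_of_mul_le_mul_left ?_ (mul_pos hfac hfac)
    linarith
  have hid : ((2 * t).choose (2 * k) : ℝ) * (2 * k).choose k =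
      (2 * t).choose k * (2 * t - k).choose (2 * k - k) := by
    exact_mod_cast Nat.choose_mul (n := 2 * t) (k := 2 * k) (s := k) (by omega)
  have hpos : (0 : ℝ) < (2 * k).choose k := by
    exact_mod_cast Nat.choose_pos (by omega)
  have hpos' : (0 : ℝ) < (2 * t - k).choose (2 * k - k) := by
    exact_mod_cast Nat.choose_pos (by omega)
  rw [div_le_iff₀ hpos']
  refine le_of_mul_le_mul_right ?_ hpos
  rw [hid]
  have := mul_le_mul_of_nonneg_right hC hpos'.le
  linarith
end
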